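/- arXiv:2002.08824 — 4 statements merged into one kernel-verified Lean document; each statement's English description precedes it below -/
import Mathlib

section
/- Let M be a matroid of rank n−k on a ground set E of cardinality n, and let Σ′ be the set of chains S = (σ_1 ⊊ σ_2 ⊊ ⋯ ⊊ σ_k) such that σ_i ∈ N_i for every i. Then the bottom-up greedy weights of M satisfy (e_1,…,e_k) = min_lex { e(S) : S ∈ Σ′ }. -/
open Finset

/-- A matroid on ground set `Fin n`, given by its rank function. -/
structure MatroidRk (n : ℕ) where
  r : Finset (Fin n) → ℕ
  r_le_card : ∀ X, r X ≤ X.card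
  r_mono : ∀ ⦃X Y : Finset (Fin n)⦄, X ⊆ Y → r X ≤ r Y
  r_submod : ∀ X Y, r (X ∩ Y) + r (X ∪ Y) ≤ r X + r Y

namespace MatroidRk

variable {n : ℕ}

/-- The nullity function `n(X) = |X| - r(X)`. -/
def nul (M : MatroidRk n) (X : Finset (Fin n)) : ℕ := X.card - M.r X

/-- `X ∈ N_i`: `X` is inclusion-minimal among the subsets of nullity `i`. -/
def Nmin (M : MatroidRk n) (i : ℕ) (X : Finset (Fin n)) : Prop :=
  M.nul X = i ∧ ∀ Y ⊆ X, M.nul Y = i → Y = X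

/-- Membership in `Σ`: a chain `σ₁ ⊊ ⋯ ⊊ σ_k` with `σ_i ∈ 𝒩_i`. -/
def SigmaChain (M : MatroidRk n) (k : ℕ) (σ : Fin k → Finset (Fin n)) : Prop :=
  StrictMono σ ∧ ∀ i : Fin k, M.nul (σ i) = (i : ℕ) + 1

/-- Membership in `Σ'`: a chain `σ₁ ⊊ ⋯ ⊊ σ_k` with `σ_i ∈ N_i`. -/
def SigmaChain' (M : MatroidRk n) (k : ℕ) (σ : Fin k → Finset (Fin n)) : Prop :=
  StrictMono σ ∧ ∀ i : Fin k, M.Nmin ((i : ℕ) + 1) (σ i)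

/-- The set `{e(S) : S ∈ Σ}` of tuples of cardinalities of chains in `Σ`. -/
def eSet (M : MatroidRk n) (k : ℕ) : Set (Fin k → ℕ) :=
  {u | ∃ σ : Fin k → Finset (Fin n), M.SigmaChain k σ ∧ ∀ i, (σ i).card = u i}

/-- The set `{e(S) : S ∈ Σ'}`. -/
def eSet' (M : MatroidRk n) (k : ℕ) : Set (Fin k → ℕ) :=
  {u | ∃ σ : Fin k → Finset (Fin n), M.SigmaChain' k σ ∧ ∀ i, (σ i).card = u i}

/-- The generalized Hamming weight `d_i = min {|σ| : σ ∈ 𝒩_i}`. -/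
noncomputable def dW (M : MatroidRk n) (i : ℕ) : ℕ :=
  sInf {c | ∃ X, M.nul X = i ∧ X.card = c}

end MatroidRk

/-- `w` is the lexicographically smallest element of `A`. -/
def IsLexMin {k : ℕ} (A : Set (Fin k → ℕ)) (w : Fin k → ℕ) : Prop :=
  w ∈ A ∧ ∀ u ∈ A, toLex w ≤ toLex u

/-- `w` is the reverse-lexicographically smallest element of `A`. -/
def IsRevLexMin {k : ℕ} (A : Set (Fin k → ℕ)) (w : Fin k → ℕ) : Prop :=
  w ∈ A ∧ ∀ u ∈ A, toLex (w ∘ Fin.rev) ≤ toLex (u ∘ Fin.rev)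

/-!
A nullity function `ν` is monotone and supermodular. If `x` is minimal among the elements of nullity
`ν x`, and `x, y ≤ z` with `ν y = ν z`, then supermodularity gives `ν x ≤ ν (x ⊓ y)`, so `x ≤ y`.
Hence choosing below each member of a chain a minimal element of the same nullity yields again a
chain, whose cardinalities are pointwise, and so lexicographically, at most the original ones.
-/

theorem isLeast_iff_of_subset_of_isCoinitialFor {α : Type*} [PartialOrder α] {s t : Set α} {a : α}
    (hst : s ⊆ t) (hts : IsCoinitialFor t s) : IsLeast t a ↔ IsLeast s a := by
  constructor
  · rintro ⟨hat, ha⟩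
    obtain ⟨b, hbs, hba⟩ := hts hat
    obtain rfl : b = a := hba.antisymm (ha (hst hbs))
    exact ⟨hbs, lowerBounds_mono_set hst ha⟩
  · rintro ⟨has, ha⟩
    exact ⟨hst has, lowerBounds_mono_of_isCoinitialFor hts ha⟩

theorem isLexMin_iff_isLeast {k : ℕ} {A : Set (Fin k → ℕ)} {w : Fin k → ℕ} :
    IsLexMin A w ↔ IsLeast (toLex '' A) (toLex w) := by
  simp only [IsLexMin, IsLeast, lowerBounds, Set.mem_ofPred_eq, Set.forall_mem_image,
    toLex.injective.mem_set_image]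

/-- Supermodularity of a function on a lattice, the property of matroid nullity functions that is
dual to submodularity of the rank. -/
def Supermodular {L β : Type*} [Lattice L] [Add β] [LE β] (ν : L → β) : Prop :=
  ∀ x y, ν x + ν y ≤ ν (x ⊓ y) + ν (x ⊔ y)

theorem Supermodular.monotone_of_map_bot {L β : Type*} [GeneralizedBooleanAlgebra L]
    [AddCommMonoid β] [PartialOrder β] [CanonicallyOrderedAdd β] {ν : L → β}
    (hν : Supermodular ν) (hbot : ν ⊥ = 0) : Monotone ν := by
  intro x y hxy
  calc ν x ≤ ν x + ν (y \ x) := le_self_add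
    _ ≤ ν (x ⊓ y \ x) + ν (x ⊔ y \ x) := hν x (y \ x)
    _ = ν y := by rw [inf_sdiff_self_right, hbot, zero_add, sup_sdiff_cancel_right hxy]

section LevelChains

variable {L β ι : Type*} [Lattice L] [Preorder ι]

/-- The chains indexed by `ι` whose `i`-th member lies on the level `d i` of `ν`. For the nullity
of a matroid and `d i = i + 1` with `i : Fin k`, this is `Σ`. -/
def levelChains (ν : L → β) (d : ι → β) : Set (ι → L) :=
  {σ | StrictMono σ ∧ ∀ i, ν (σ i) = d i}

/-- The chains indexed by `ι` whose `i`-th member is a minimal element of the level `d i` of `ν`.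
For the nullity of a matroid and `d i = i + 1` with `i : Fin k`, this is `Σ'`. -/
def minimalLevelChains (ν : L → β) (d : ι → β) : Set (ι → L) :=
  {σ | StrictMono σ ∧ ∀ i, Minimal (ν · = d i) (σ i)}

theorem minimalLevelChains_subset_levelChains (ν : L → β) (d : ι → β) :
    minimalLevelChains ν d ⊆ levelChains ν d :=
  fun _ hσ ↦ ⟨hσ.1, fun i ↦ (hσ.2 i).prop⟩

variable [AddCommMonoid β] [PartialOrder β] [IsOrderedCancelAddMonoid β] {ν : L → β} {d : ι → β}

theorem Supermodular.le_of_minimal (hν : Supermodular ν) (hmono : Monotone ν) {b : β} {x y z : L}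
    (hx : Minimal (ν · = b) x) (hxz : x ≤ z) (hyz : y ≤ z) (hy : ν y = ν z) : x ≤ y := by
  have hle : ν x ≤ ν (x ⊓ y) := by
    refine le_of_add_le_add_right (a := ν y) ?_
    calc ν x + ν y ≤ ν (x ⊓ y) + ν (x ⊔ y) := hν x y
      _ ≤ ν (x ⊓ y) + ν z := by gcongr; exact hmono (sup_le hxz hyz)
      _ = ν (x ⊓ y) + ν y := by rw [hy]
  have hinf : ν (x ⊓ y) = b := ((hmono inf_le_left).antisymm hle).trans hx.prop
  exact inf_eq_left.mp (hx.eq_of_le hinf inf_le_left)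

theorem Supermodular.levelChains_isCoinitialFor [WellFoundedLT L] (hν : Supermodular ν)
    (hmono : Monotone ν) (hd : Function.Injective d) :
    IsCoinitialFor (levelChains ν d) (minimalLevelChains ν d) := by
  rintro σ ⟨hσ, hνσ⟩
  choose τ hτσ hτ using fun i ↦ exists_minimal_le_of_wellFoundedLT (ν · = d i) (σ i) (hνσ i)
  have hτ_le {i j : ι} (hij : i < j) : τ i ≤ τ j :=
    hν.le_of_minimal hmono (hτ i) ((hτσ i).trans (hσ hij).le) (hτσ j)
      ((hτ j).prop.trans (hνσ j).symm)
  have hτ_ne {i j : ι} (hij : i < j) : τ i ≠ τ j := fun h ↦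
    hd.ne hij.ne ((hτ i).prop.symm.trans ((congrArg ν h).trans (hτ j).prop))
  exact ⟨τ, ⟨fun _ _ hij ↦ (hτ_le hij).lt_of_ne (hτ_ne hij), hτ⟩, hτσ⟩

theorem statement0_general [WellFoundedLT L] {k : ℕ} {d : Fin k → β} {c : L → ℕ}
    (hν : Supermodular ν) (hmono : Monotone ν) (hd : Function.Injective d) (hc : Monotone c)
    (w : Fin k → ℕ) :
    IsLexMin ((c ∘ ·) '' levelChains ν d) w ↔ IsLexMin ((c ∘ ·) '' minimalLevelChains ν d) w := by
  have hc_comp : Monotone fun σ : Fin k → L ↦ c ∘ σ := fun _ _ h i ↦ hc (h i)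
  rw [isLexMin_iff_isLeast, isLexMin_iff_isLeast]
  exact isLeast_iff_of_subset_of_isCoinitialFor
    (Set.image_mono (Set.image_mono (minimalLevelChains_subset_levelChains ν d)))
    (((hν.levelChains_isCoinitialFor hmono hd).image_of_monotone hc_comp).image_of_monotone
      Pi.toLex_monotone)

end LevelChains

namespace MatroidRk

variable {n : ℕ} (M : MatroidRk n)

theorem nul_add_r (X : Finset (Fin n)) : M.nul X + M.r X = X.card :=
  Nat.sub_add_cancel (M.r_le_card X)

theorem nul_empty : M.nul ∅ = 0 := by
  simp only [nul, card_empty, Nat.zero_sub]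

theorem supermodular_nul : Supermodular M.nul := by
  intro X Y
  have hcard := card_inter_add_card_union X Y
  simp only [← M.nul_add_r] at hcard
  have hsubmod := M.r_submod X Y
  simp only [inf_eq_inter, sup_eq_union]
  lia

theorem monotone_nul : Monotone M.nul :=
  M.supermodular_nul.monotone_of_map_bot M.nul_empty

theorem nmin_iff_minimal {i : ℕ} {X : Finset (Fin n)} :
    M.Nmin i X ↔ Minimal (M.nul · = i) X := by
  rw [minimal_iff]
  exact and_congr_right fun _ ↦
    ⟨fun h Y hY hYX ↦ (h Y hYX hY).symm, fun h Y hYX hY ↦ (h hY hYX).symm⟩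

theorem eSet_eq_image (k : ℕ) :
    M.eSet k = (card ∘ ·) '' levelChains M.nul (fun i : Fin k ↦ (i : ℕ) + 1) := by
  simp only [eSet, SigmaChain, levelChains, Set.image, funext_iff, Function.comp_apply,
    Set.mem_ofPred_eq]

theorem eSet'_eq_image (k : ℕ) :
    M.eSet' k = (card ∘ ·) '' minimalLevelChains M.nul (fun i : Fin k ↦ (i : ℕ) + 1) := by
  simp only [eSet', SigmaChain', nmin_iff_minimal, minimalLevelChains, Set.image, funext_iff,
    Function.comp_apply, Set.mem_ofPred_eq]

end MatroidRk

open MatroidRk in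
/-- the bottom-up greedy weights, defined as the lexicographic minimum of
`{e(S) : S ∈ Σ}`, coincide with the lexicographic minimum of `{e(S) : S ∈ Σ'}`. -/
theorem statement0 {n k : ℕ} (M : MatroidRk n) (hrk : M.r Finset.univ + k = n)
    (w : Fin k → ℕ) :
    IsLexMin (M.eSet k) w ↔ IsLexMin (M.eSet' k) w := by
  rw [M.eSet_eq_image, M.eSet'_eq_image]
  exact statement0_general M.supermodular_nul M.monotone_nul
    ((add_left_injective 1).comp Fin.val_injective) card_mono w
end

section
/- Let M be a matroid of rank n−k on a ground set E of cardinality n, and let Σ′ be the set of chains S = (σ_1 ⊊ σ_2 ⊊ ⋯ ⊊ σ_k) such that σ_i ∈ N_i for every i. Then the top-down greedy weights of M satisfy (ẽ_1,…,ẽ_k) = min_revlex { e(S) : S ∈ Σ′ }. -/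
/-!
Adding an element raises the nullity by at most one, so below every set `Y` there is a chain of
subsets realizing all the nullities up to that of `Y`. If some `σ i` in a chain of `Σ` properly
contains a set `Y` of the same nullity, replace `σ 0, …, σ i` by such a chain below `Y`: the
entries above `i` are unchanged and the size of `σ i` drops, so the cardinality sequence becomes
reverse-lexicographically smaller. Hence the minimum over `Σ` is attained in `Σ'`.
-/

open Finset

theorem monotone_ite_le {α β : Type*} [LinearOrder α] [Preorder β] {f g : α → β} {c : α}
    (hf : Monotone f) (hg : Monotone g) (hfg : ∀ a b, a ≤ c → c < b → f a ≤ g b) :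
    Monotone fun a => if a ≤ c then f a else g a := by
  intro a b hab
  dsimp only
  split_ifs with ha hb hb
  · exact hf hab
  · exact hfg a b ha (not_le.mp hb)
  · exact absurd (hab.trans hb) ha
  · exact hg hab

theorem exists_monotone_subset_apply_eq {α : Type*} [DecidableEq α] {f : Finset α → ℕ}
    (hempty : f ∅ = 0) (hinsert : ∀ a s, f (insert a s) ≤ f s + 1) (s : Finset α) :
    ∃ τ : ℕ → Finset α, Monotone τ ∧ (∀ j, τ j ⊆ s) ∧ ∀ j ≤ f s, f (τ j) = j := by
  induction s using Finset.induction_on with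
  | empty => exact ⟨fun _ => ∅, monotone_const, fun _ => Subset.rfl, by simp [hempty]⟩
  | insert a s _ ih =>
    obtain ⟨τ, hmono, hsub, hf⟩ := ih
    have hsub' (j : ℕ) : τ j ⊆ insert a s := (hsub j).trans (subset_insert a s)
    refine ⟨fun j => if j ≤ f s then τ j else insert a s,
      monotone_ite_le hmono monotone_const fun i _ _ _ => hsub' i, fun j => ?_, fun j hj => ?_⟩
    · dsimp only
      split_ifs
      exacts [hsub' j, Subset.rfl]
    · dsimp only
      split_ifs with hjs
      · exact hf j hjs
      · have := hinsert a s
        omega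

theorem toLex_comp_rev_lt {k : ℕ} {β : Type*} [LT β] {u v : Fin k → β} (i : Fin k)
    (heq : ∀ j > i, u j = v j) (hlt : u i < v i) :
    toLex (u ∘ Fin.rev) < toLex (v ∘ Fin.rev) :=
  ⟨i.rev, fun j hj => heq j.rev (Fin.lt_rev_iff.mp hj), by simpa using hlt⟩

theorem exists_isRevLexMin {k : ℕ} {A : Set (Fin k → ℕ)} (hA : A.Nonempty) :
    ∃ w, IsRevLexMin A w := by
  obtain ⟨w, hw⟩ := exists_minimalFor_of_wellFoundedLT (· ∈ A) (fun u => toLex (u ∘ Fin.rev)) hA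
  exact ⟨w, hw.prop, fun u hu => le_of_not_gt fun h => hw.not_prop_of_lt h hu⟩

theorem isRevLexMin_iff_of_subset {k : ℕ} {A B : Set (Fin k → ℕ)} (hBA : B ⊆ A)
    (hmin : ∀ w, IsRevLexMin A w → w ∈ B) (w : Fin k → ℕ) :
    IsRevLexMin A w ↔ IsRevLexMin B w := by
  refine ⟨fun h => ⟨hmin w h, fun u hu => h.2 u (hBA hu)⟩, fun h => ⟨hBA h.1, fun u hu => ?_⟩⟩
  obtain ⟨v, hv⟩ := exists_isRevLexMin ⟨w, hBA h.1⟩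
  exact (h.2 v (hmin v hv)).trans (hv.2 u hu)

namespace MatroidRk

variable {n : ℕ} (M : MatroidRk n)

theorem nul_insert_le (a : Fin n) (X : Finset (Fin n)) : M.nul (insert a X) ≤ M.nul X + 1 := by
  have hcard : (insert a X).card ≤ X.card + 1 := card_insert_le a X
  have hmono : M.r X ≤ M.r (insert a X) := M.r_mono (subset_insert a X)
  unfold nul
  omega

theorem exists_monotone_subset_nul_eq (Y : Finset (Fin n)) :
    ∃ τ : ℕ → Finset (Fin n), Monotone τ ∧ (∀ j, τ j ⊆ Y) ∧ ∀ j ≤ M.nul Y, M.nul (τ j) = j :=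
  exists_monotone_subset_apply_eq M.nul_empty M.nul_insert_le Y

theorem eSet'_subset_eSet (k : ℕ) : M.eSet' k ⊆ M.eSet k :=
  fun _ ⟨σ, hσ, hcard⟩ => ⟨σ, ⟨hσ.1, fun i => (hσ.2 i).1⟩, hcard⟩

variable {M} {k : ℕ}

theorem sigmaChain_of_monotone {σ : Fin k → Finset (Fin n)} (hmono : Monotone σ)
    (hnul : ∀ i : Fin k, M.nul (σ i) = (i : ℕ) + 1) : M.SigmaChain k σ := by
  refine ⟨hmono.strictMono_of_injective fun i j hij => Fin.ext ?_, hnul⟩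
  have := congrArg M.nul hij
  rw [hnul, hnul] at this
  omega

theorem SigmaChain.exists_replace {σ : Fin k → Finset (Fin n)} (hσ : M.SigmaChain k σ) {i : Fin k}
    {Y : Finset (Fin n)} (hY : Y ⊆ σ i) (hnul : M.nul Y = (i : ℕ) + 1) :
    ∃ σ', M.SigmaChain k σ' ∧ σ' i ⊆ Y ∧ ∀ j > i, σ' j = σ j := by
  obtain ⟨τ, hmono, hsub, hτ⟩ := M.exists_monotone_subset_nul_eq Y
  have hmono' : Monotone fun j : Fin k => if j ≤ i then τ (j + 1) else σ j :=
    monotone_ite_le (fun a b hab => hmono (by simpa using hab)) hσ.1.monotone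
      fun a b _ hb => ((hsub _).trans hY).trans (hσ.1.monotone hb.le)
  refine ⟨_, sigmaChain_of_monotone hmono' fun j => ?_, ?_, fun j hj => if_neg hj.not_ge⟩
  · split_ifs with hj
    · exact hτ _ (by simpa [hnul] using hj)
    · exact hσ.2 j
  · simpa only [le_refl, if_true] using hsub _

theorem mem_eSet'_of_isRevLexMin_eSet {w : Fin k → ℕ} (hw : IsRevLexMin (M.eSet k) w) :
    w ∈ M.eSet' k := by
  obtain ⟨⟨σ, hσ, hcard⟩, hmin⟩ := hw
  refine ⟨σ, ⟨hσ.1, fun i => ⟨hσ.2 i, fun Y hY hnul => ?_⟩⟩, hcard⟩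
  by_contra hne
  obtain ⟨σ', hσ', hsub, heq⟩ := hσ.exists_replace hY hnul
  have hlt : (σ' i).card < w i :=
    calc (σ' i).card ≤ Y.card := card_le_card hsub
      _ < (σ i).card := card_lt_card (hY.ssubset_of_ne hne)
      _ = w i := hcard i
  have hlex : toLex ((fun j => (σ' j).card) ∘ Fin.rev) < toLex (w ∘ Fin.rev) :=
    toLex_comp_rev_lt i (fun j hj => by rw [heq j hj, hcard j]) hlt
  exact (hmin _ ⟨σ', hσ', fun _ => rfl⟩).not_gt hlex

end MatroidRk

theorem statement1_general {n : ℕ} (M : MatroidRk n) (k : ℕ) (w : Fin k → ℕ) :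
    IsRevLexMin (M.eSet k) w ↔ IsRevLexMin (M.eSet' k) w :=
  isRevLexMin_iff_of_subset (M.eSet'_subset_eSet k)
    (fun _ => MatroidRk.mem_eSet'_of_isRevLexMin_eSet) w

open MatroidRk in
/-- the top-down greedy weights, defined as the reverse-lexicographic minimum of
`{e(S) : S ∈ Σ}`, coincide with the reverse-lexicographic minimum of `{e(S) : S ∈ Σ'}`. -/
theorem statement1 {n k : ℕ} (M : MatroidRk n) (hrk : M.r Finset.univ + k = n)
    (w : Fin k → ℕ) :
    IsRevLexMin (M.eSet k) w ↔ IsRevLexMin (M.eSet' k) w :=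
  statement1_general M k w
end

section
/- Let M be a matroid of rank n−k on a ground set E of cardinality n. Then for every 2 ≤ i ≤ k, the CEZ greedy weight g_i satisfies g_i = min { |σ| : σ ∈ N_i and there exists τ ∈ N_{i−1} with τ ⊆ σ and |τ| = d_{i−1} }. -/
open Finset

/-!
Nullity is supermodular. If `Y ⊆ X` is minimal of nullity `j` and `Z ⊆ X` has the same nullity as
`X`, then so does `Y ∪ Z`, whence `Y ∩ Z` has nullity at least `j` and so `Y ⊆ Z`. Now a set `Y` of
least cardinality among those of nullity `j` is minimal, so shrinking `X ⊇ Y` without changing its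
nullity never loses `Y`. A set `X` of least cardinality over such `Y` is therefore itself minimal.
-/

namespace MatroidRk

variable {n : ℕ} (M : MatroidRk n)

theorem r_add_nul (X : Finset (Fin n)) : M.r X + M.nul X = X.card :=
  Nat.add_sub_of_le (M.r_le_card X)

theorem nul_supermod (X Y : Finset (Fin n)) :
    M.nul X + M.nul Y ≤ M.nul (X ∩ Y) + M.nul (X ∪ Y) := by
  have hsub := M.r_submod X Y
  have hcard := card_inter_add_card_union X Y
  simp only [← M.r_add_nul] at hcard
  lia

theorem nul_mono {X Y : Finset (Fin n)} (h : X ⊆ Y) : M.nul X ≤ M.nul Y := by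
  have hsup := M.nul_supermod X (Y \ X)
  rw [inter_sdiff_self, union_sdiff_of_subset h, M.nul_empty] at hsup
  lia

theorem nul_le_nul_erase_add_one (X : Finset (Fin n)) (x : Fin n) :
    M.nul X ≤ M.nul (X.erase x) + 1 := by
  have hr := M.r_mono (erase_subset x X)
  have hcard : X.card - 1 ≤ (X.erase x).card := pred_card_le_card_erase
  simp only [← M.r_add_nul] at hcard
  lia

theorem exists_nul_eq_of_subset {i : ℕ} {Y Z : Finset (Fin n)} (hYZ : Y ⊆ Z)
    (hY : M.nul Y ≤ i) (hZ : i ≤ M.nul Z) : ∃ X, Y ⊆ X ∧ X ⊆ Z ∧ M.nul X = i := by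
  induction Z using Finset.strongInduction with
  | H Z ih =>
    rcases hZ.eq_or_lt with hi | hi
    · exact ⟨Z, hYZ, Subset.rfl, hi.symm⟩
    · have hne : Y ≠ Z := by
        rintro rfl
        exact hi.not_ge hY
      obtain ⟨x, hxZ, hxY⟩ := exists_of_ssubset (hYZ.ssubset_of_ne hne)
      have hle : i ≤ M.nul (Z.erase x) := by
        have hstep := M.nul_le_nul_erase_add_one Z x
        lia
      obtain ⟨X, hYX, hXZ, hX⟩ :=
        ih (Z.erase x) (erase_ssubset hxZ) (subset_erase.mpr ⟨hYZ, hxY⟩) hle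
      exact ⟨X, hYX, hXZ.trans (erase_subset x Z), hX⟩

variable {M} in
theorem Nmin.subset_of_nul_eq {j : ℕ} {X Y Z : Finset (Fin n)} (hY : M.Nmin j Y) (hYX : Y ⊆ X)
    (hZX : Z ⊆ X) (hZ : M.nul Z = M.nul X) : Y ⊆ Z := by
  have hsup := M.nul_supermod Y Z
  have hunion : M.nul (Y ∪ Z) ≤ M.nul X := M.nul_mono (union_subset hYX hZX)
  have hinter : M.nul (Y ∩ Z) ≤ M.nul Y := M.nul_mono inter_subset_left
  have heq : M.nul (Y ∩ Z) = M.nul Y := by lia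
  exact inter_eq_left.mp (hY.2 (Y ∩ Z) inter_subset_left (heq.trans hY.1))

theorem dW_nul_le_card (X : Finset (Fin n)) : M.dW (M.nul X) ≤ X.card :=
  Nat.sInf_le ⟨X, rfl, rfl⟩

theorem nmin_of_card_eq_dW {j : ℕ} {Y : Finset (Fin n)} (hY : M.nul Y = j)
    (hcard : Y.card = M.dW j) : M.Nmin j Y := by
  refine ⟨hY, fun Z hZY hZ => eq_of_subset_of_card_le hZY ?_⟩
  rw [hcard, ← hZ]
  exact M.dW_nul_le_card Z

theorem exists_nul_eq_card_eq_dW {j : ℕ} (hj : j ≤ M.nul univ) :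
    ∃ Y, M.nul Y = j ∧ Y.card = M.dW j := by
  obtain ⟨Y, -, -, hY⟩ :=
    M.exists_nul_eq_of_subset (subset_univ ∅) (M.nul_empty.trans_le j.zero_le) hj
  exact Nat.sInf_mem (s := {c | ∃ X, M.nul X = j ∧ X.card = c}) ⟨Y.card, Y, hY, rfl⟩

/-- The cardinalities of the sets of nullity `i` that contain a set of nullity `j` of the least
possible cardinality `d_j`. The greedy weight `g_i` is the minimum of `M.greedyCards (i - 1) i`. -/
def greedyCards (j i : ℕ) : Set ℕ :=
  {c | ∃ X, M.nul X = i ∧ (∃ Y, M.nul Y = j ∧ Y ⊆ X ∧ Y.card = M.dW j) ∧ X.card = c}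

theorem greedyCards_nonempty {i j : ℕ} (hji : j ≤ i) (hi : i ≤ M.nul univ) :
    (M.greedyCards j i).Nonempty := by
  obtain ⟨Y, hY, hYcard⟩ := M.exists_nul_eq_card_eq_dW (hji.trans hi)
  obtain ⟨X, hYX, -, hX⟩ := M.exists_nul_eq_of_subset (subset_univ Y) (hY.trans_le hji) hi
  exact ⟨X.card, X, hX, ⟨Y, hY, hYX, hYcard⟩, rfl⟩

theorem nmin_of_isLeast_greedyCards {i j : ℕ} {X Y : Finset (Fin n)} (hX : M.nul X = i)
    (hY : M.nul Y = j) (hYX : Y ⊆ X) (hYcard : Y.card = M.dW j)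
    (hleast : IsLeast (M.greedyCards j i) X.card) : M.Nmin i X := by
  refine ⟨hX, fun Z hZX hZ => eq_of_subset_of_card_le hZX (hleast.2 ?_)⟩
  have hYZ : Y ⊆ Z := (M.nmin_of_card_eq_dW hY hYcard).subset_of_nul_eq hYX hZX (hZ.trans hX.symm)
  exact ⟨Z, hZ, ⟨Y, hY, hYZ, hYcard⟩, rfl⟩

end MatroidRk

theorem statement2_general {n : ℕ} (M : MatroidRk n) {i j : ℕ} (hji : j ≤ i)
    (hi : i ≤ M.nul univ) :
    IsLeast {c | ∃ X, M.Nmin i X ∧ (∃ Y, M.Nmin j Y ∧ Y ⊆ X ∧ Y.card = M.dW j) ∧ X.card = c}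
      (sInf {c | ∃ X, M.nul X = i ∧
        (∃ Y, M.nul Y = j ∧ Y ⊆ X ∧ Y.card = M.dW j) ∧ X.card = c}) := by
  change IsLeast _ (sInf (M.greedyCards j i))
  have hleast : IsLeast (M.greedyCards j i) (sInf (M.greedyCards j i)) :=
    ⟨Nat.sInf_mem (M.greedyCards_nonempty hji hi), fun _ => Nat.sInf_le⟩
  constructor
  · obtain ⟨X, hX, ⟨Y, hY, hYX, hYcard⟩, hXcard⟩ := hleast.1
    rw [← hXcard] at hleast
    exact ⟨X, M.nmin_of_isLeast_greedyCards hX hY hYX hYcard hleast,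
      ⟨Y, M.nmin_of_card_eq_dW hY hYcard, hYX, hYcard⟩, hXcard⟩
  · rintro c ⟨X, hX, ⟨Y, hY, hYX, hYcard⟩, hXcard⟩
    exact hleast.2 ⟨X, hX.1, ⟨Y, hY.1, hYX, hYcard⟩, hXcard⟩

open MatroidRk in
/-- for `2 ≤ i ≤ k`, the CEZ greedy weight
`g_i = min {|σ| : σ ∈ 𝒩_i, ∃ τ ∈ 𝒩_{i-1}, τ ⊆ σ, |τ| = d_{i-1}}` equals the same minimum
taken over `σ ∈ N_i` and `τ ∈ N_{i-1}`. -/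
theorem statement2 {n k : ℕ} (M : MatroidRk n) (hrk : M.r Finset.univ + k = n)
    (i : ℕ) (h2 : 2 ≤ i) (hik : i ≤ k) :
    sInf {c | ∃ X, M.nul X = i ∧
        (∃ Y, M.nul Y = i - 1 ∧ Y ⊆ X ∧ Y.card = M.dW (i - 1)) ∧ X.card = c} =
    sInf {c | ∃ X, M.Nmin i X ∧
        (∃ Y, M.Nmin (i - 1) Y ∧ Y ⊆ X ∧ Y.card = M.dW (i - 1)) ∧ X.card = c} := by
  have hnul : M.nul Finset.univ = k := by simp [nul, ← hrk]
  exact (statement2_general M (i.sub_le 1) (hik.trans_eq hnul.symm)).csInf_eq.symm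
end

section
/- Let C be an [n,k] linear code over F_q with parity check matrix H, and let X ⊆ E = {1,…,n}. Let C(X) = { c ∈ C : Supp(c) ⊆ X }. Then Supp(C(X)) = X if and only if X ∈ N_{n(X)}, i.e. X is inclusion-minimal among the subsets of E of nullity n(X) in the matroid M_C. -/
open Finset
open scoped Classical

noncomputable section

/-- The rank in the matroid `M_C`: `r(X)` is the rank of the column submatrix `H_X`. -/
def colRank {F : Type*} [Field F] {m n : ℕ} (H : Matrix (Fin m) (Fin n) F)
    (X : Finset (Fin n)) : ℕ :=
  Module.finrank F (Submodule.span F ((fun j i => H i j) '' (X : Set (Fin n))))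

/-- The nullity function of the matroid `M_C`: `n(X) = |X| - r(X)`. -/
def nulC {F : Type*} [Field F] {m n : ℕ} (H : Matrix (Fin m) (Fin n) F)
    (X : Finset (Fin n)) : ℕ :=
  X.card - colRank H X

/-- The support of a word. -/
def supp {F : Type*} [Field F] {n : ℕ} (c : Fin n → F) : Finset (Fin n) :=
  Finset.univ.filter (fun i => c i ≠ 0)

/-- The support of a subcode. -/
def suppD {F : Type*} [Field F] {n : ℕ} (D : Submodule F (Fin n → F)) : Finset (Fin n) :=
  Finset.univ.filter (fun i => ∃ c ∈ D, c i ≠ 0)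

/-- The weight of a subcode: the cardinality of its support. -/
def wt {F : Type*} [Field F] {n : ℕ} (D : Submodule F (Fin n → F)) : ℕ := (suppD D).card

/-- The subcode `C(X) = {c ∈ C : Supp(c) ⊆ X}`. -/
def codeRestrict {F : Type*} [Field F] {n : ℕ} (C : Submodule F (Fin n → F))
    (X : Finset (Fin n)) : Submodule F (Fin n → F) where
  carrier := {c | c ∈ C ∧ ∀ i ∉ X, c i = 0}
  add_mem' := by
    rintro a b ⟨ha, ha0⟩ ⟨hb, hb0⟩
    exact ⟨C.add_mem ha hb, fun i hi => by simp [Pi.add_apply, ha0 i hi, hb0 i hi]⟩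
  zero_mem' := ⟨C.zero_mem, fun i _ => rfl⟩
  smul_mem' := by
    rintro r a ⟨ha, ha0⟩
    exact ⟨C.smul_mem r ha, fun i hi => by simp [Pi.smul_apply, ha0 i hi]⟩

/-- The code defined by the parity check matrix `H`: `C = {x : H x = 0}`. -/
def codeOf {F : Type*} [Field F] {m n : ℕ} (H : Matrix (Fin m) (Fin n) F) :
    Submodule F (Fin n → F) :=
  LinearMap.ker H.mulVecLin

/-- The `r`-th generalized Hamming weight of a code `C`. -/
def dC {F : Type*} [Field F] {n : ℕ} (C : Submodule F (Fin n → F)) (r : ℕ) : ℕ :=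
  sInf {w | ∃ D : Submodule F (Fin n → F), D ≤ C ∧ Module.finrank F D = r ∧ wt D = w}

/-- `D` computes `d_r(C)`: `D ⊆ C`, `dim D = r` and `wt(D) = d_r(C)`. -/
def Computes {F : Type*} [Field F] {n : ℕ} (C : Submodule F (Fin n → F)) (r : ℕ)
    (D : Submodule F (Fin n → F)) : Prop :=
  D ≤ C ∧ Module.finrank F D = r ∧ wt D = dC C r

end

/-!
By rank–nullity for the parity check matrix restricted to the words supported in `X`, the nullity
of `X` is `dim C(X)`. For `Y ⊆ X` we have `C(Y) ≤ C(X)`, so equal nullities force `C(Y) = C(X)`;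
as `C(Supp C(X)) = C(X)`, the least `Y ⊆ X` with the nullity of `X` is `Supp C(X)`.
-/

section Support

variable {F : Type*} [Field F] {n : ℕ}

theorem suppD_subset_iff {D : Submodule F (Fin n → F)} {X : Finset (Fin n)} :
    suppD D ⊆ X ↔ ∀ c ∈ D, ∀ i ∉ X, c i = 0 := by
  simp only [suppD, subset_iff, mem_filter_univ]
  grind

theorem le_codeRestrict_iff {C D : Submodule F (Fin n → F)} {X : Finset (Fin n)} :
    D ≤ codeRestrict C X ↔ D ≤ C ∧ suppD D ⊆ X := by
  rw [suppD_subset_iff]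
  exact forall₂_and

theorem codeRestrict_le (C : Submodule F (Fin n → F)) (X : Finset (Fin n)) :
    codeRestrict C X ≤ C :=
  (le_codeRestrict_iff.1 le_rfl).1

theorem suppD_codeRestrict_subset (C : Submodule F (Fin n → F)) (X : Finset (Fin n)) :
    suppD (codeRestrict C X) ⊆ X :=
  (le_codeRestrict_iff.1 le_rfl).2

theorem codeRestrict_mono (C : Submodule F (Fin n → F)) {X Y : Finset (Fin n)} (h : Y ⊆ X) :
    codeRestrict C Y ≤ codeRestrict C X :=
  le_codeRestrict_iff.2 ⟨codeRestrict_le C Y, (suppD_codeRestrict_subset C Y).trans h⟩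

theorem codeRestrict_suppD_codeRestrict (C : Submodule F (Fin n → F)) (X : Finset (Fin n)) :
    codeRestrict C (suppD (codeRestrict C X)) = codeRestrict C X :=
  le_antisymm (codeRestrict_mono C (suppD_codeRestrict_subset C X))
    (le_codeRestrict_iff.2 ⟨codeRestrict_le C X, Subset.rfl⟩)

theorem suppD_codeRestrict_eq_iff (C : Submodule F (Fin n → F)) (X : Finset (Fin n)) :
    suppD (codeRestrict C X) = X ↔
      ∀ Y ⊆ X, Module.finrank F (codeRestrict C Y) = Module.finrank F (codeRestrict C X) →
        Y = X := by
  constructor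
  · intro hsupp Y hYX hdim
    have hcode : codeRestrict C Y = codeRestrict C X :=
      Submodule.eq_of_le_of_finrank_eq (codeRestrict_mono C hYX) hdim
    have hXY : X ⊆ Y := by
      rw [← hsupp, ← hcode]
      exact suppD_codeRestrict_subset C Y
    exact hYX.antisymm hXY
  · intro hmin
    exact hmin _ (suppD_codeRestrict_subset C X) (by rw [codeRestrict_suppD_codeRestrict])

end Support

section Nullity

universe u

theorem finrank_map_add_finrank_inf_ker {R : Type*} {M : Type u} {N : Type*} [Ring R]
    [StrongRankCondition R] [HasRankNullity.{u} R] [AddCommGroup M] [Module R M]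
    [AddCommGroup N] [Module R N] (f : M →ₗ[R] N) (p : Submodule R M) [Module.Finite R p] :
    Module.finrank R (p.map f) + Module.finrank R (p ⊓ LinearMap.ker f : Submodule R M) =
      Module.finrank R p := by
  rw [← f.range_domRestrict p, ← Submodule.map_comap_subtype, Submodule.finrank_map_subtype_eq,
    ← LinearMap.ker_domRestrict, ← (f.domRestrict p).quotKerEquivRange.finrank_eq,
    Submodule.finrank_quotient_add_finrank]

variable {F : Type*} [Field F] {m n : ℕ}

theorem codeRestrict_eq_spanSubset_inf (C : Submodule F (Fin n → F)) (X : Finset (Fin n)) :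
    codeRestrict C X = Pi.spanSubset F (X : Set (Fin n)) ⊓ C := by
  ext c
  rw [Submodule.mem_inf, Pi.mem_spanSubset_iff]
  exact and_comm

theorem colRank_eq_finrank_map_spanSubset (H : Matrix (Fin m) (Fin n) F) (X : Finset (Fin n)) :
    colRank H X =
      Module.finrank F ((Pi.spanSubset F (X : Set (Fin n))).map H.mulVecLin) := by
  have hcol (j : Fin n) : H.mulVecLin (Pi.basisFun F (Fin n) j) = H.col j := by
    rw [Pi.basisFun_apply, Matrix.mulVecLin_apply, Matrix.mulVec_single_one]
  have himage : H.mulVecLin '' (Pi.basisFun F (Fin n) '' X) = H.col '' X := by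
    rw [Set.image_image, Set.image_congr' hcol]
  rw [Pi.spanSubset, Submodule.map_span, himage]
  rfl

theorem colRank_add_finrank_codeRestrict (H : Matrix (Fin m) (Fin n) F) (X : Finset (Fin n)) :
    colRank H X + Module.finrank F (codeRestrict (codeOf H) X) = X.card := by
  rw [colRank_eq_finrank_map_spanSubset, codeRestrict_eq_spanSubset_inf, codeOf,
    finrank_map_add_finrank_inf_ker, Pi.dim_spanSubset, Set.ncard_coe_finset]

theorem nulC_eq_finrank_codeRestrict (H : Matrix (Fin m) (Fin n) F) (X : Finset (Fin n)) :
    nulC H X = Module.finrank F (codeRestrict (codeOf H) X) := by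
  rw [nulC, ← colRank_add_finrank_codeRestrict H X, Nat.add_sub_cancel_left]

end Nullity

theorem statement8_general {F : Type*} [Field F] {m n : ℕ} (H : Matrix (Fin m) (Fin n) F)
    (X : Finset (Fin n)) :
    suppD (codeRestrict (codeOf H) X) = X ↔
      ∀ Y ⊆ X, nulC H Y = nulC H X → Y = X := by
  simp only [nulC_eq_finrank_codeRestrict H]
  exact suppD_codeRestrict_eq_iff (codeOf H) X

/-- for an `[n,k]` code `C` with parity check matrix `H` and `X ⊆ E`,
`Supp(C(X)) = X` if and only if `X ∈ N_{n(X)}`, i.e. `X` is inclusion-minimal among the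
subsets of nullity `n(X)` in the matroid `M_C`. -/
theorem statement8 {F : Type*} [Field F] [Fintype F] {m k n : ℕ} (hmk : m + k = n)
    (H : Matrix (Fin m) (Fin n) F) (hH : H.rank = m) (X : Finset (Fin n)) :
    suppD (codeRestrict (codeOf H) X) = X ↔
      ∀ Y ⊆ X, nulC H Y = nulC H X → Y = X :=
  statement8_general H X
end
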